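/- arXiv:2303.15366 — 3 statements merged into one kernel-verified Lean document; each statement's English description precedes it below -/
import Mathlib

section
/- Let $G_1$ and $G_2$ be groups and for $i=1,2$ let $\rho_i : G_i \to \mathrm{GL}(V_i)$ be an irreducible finite-dimensional complex representation. Let $\rho_1 \otimes \rho_2$ denote the representation of $G_1 \times G_2$ on $V_1 \otimes V_2$ given by $(g_1,g_2) \mapsto \rho_1(g_1) \otimes \rho_2(g_2)$. Then there is an isomorphism $H^1(G_1 \times G_2, \mathrm{ad}\,(\rho_1 \otimes \rho_2)) \;\cong\; H^1(G_1, \mathrm{ad}\,\rho_1) \oplus H^1(G_2, \mathrm{ad}\,\rho_2)$. -/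
/-!
Put `Wᵢ = End Vᵢ`, so that `End (V₁ ⊗ V₂) = W₁ ⊗ W₂`. By Schur's lemma the invariants of `Wᵢ` are
the line spanned by `wᵢ = 1`, and this is the only consequence of irreducibility that is used. The
isomorphism is induced by `(c₁, c₂) ↦ c₁(g₁) ⊗ w₂ + w₁ ⊗ c₂(g₂)` on cocycles.

* Its kernel is `B¹ × B¹` (`kunneth_coboundary_iff`): restrict to `G₁` and apply a functional
  `φ` on `W₂` with `φ w₂ = 1` to the second tensor factor, and symmetrically.
* It is surjective modulo coboundaries (`exists_kunneth_decomposition`). Let `f` be a cocycle of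
  `G₁ × G₂`. For a functional `φ` on `W₂`, contraction of `f(·, 1)` with `φ` is a cocycle `a_φ` of
  `G₁` in `W₁`, and the commutation of `(g₁, 1)` with `(1, g₂)` shows that `a_{φ ∘ g₂} - a_φ` is a
  coboundary. The functionals `φ ∘ g₂ - φ` span the annihilator of the invariants `k w₂`, so `a_φ`
  is a coboundary whenever `φ w₂ = 0` (`slice_coboundary`). Hence, after subtracting a coboundary
  from `f`, the restriction `f(·, 1)` has the form `c₁ ⊗ w₂`. This is fixed by `G₂`, so the
  commutation relation now says that `f(1, ·)` takes values in
  `(W₁ ⊗ W₂)^{G₁} = w₁ ⊗ W₂` (`eq_tmul_of_invariant`).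
-/

open scoped TensorProduct

namespace KunnethAd

open groupCohomology

variable {k G G₁ G₂ W W₁ W₂ : Type} [Field k] [Group G] [Group G₁] [Group G₂]
  [AddCommGroup W] [Module k W] [AddCommGroup W₁] [Module k W₁] [AddCommGroup W₂] [Module k W₂]

/-! ### Cocycles and coboundaries as functions -/

lemma mem_coboundaries₁_of_iff (σ : Representation k G W) (f : G → W) :
    f ∈ coboundaries₁ (Rep.of σ) ↔ ∃ x : W, ∀ g, f g = σ g x - x := by
  constructor
  · rintro ⟨x, rfl⟩
    exact ⟨x, fun g => rfl⟩
  · rintro ⟨x, hx⟩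
    exact ⟨x, funext fun g => (hx g).symm⟩

lemma mem_cocycles₁_of_iff (σ : Representation k G W) (f : G → W) :
    f ∈ cocycles₁ (Rep.of σ) ↔ ∀ g h, f (g * h) = σ g (f h) + f g :=
  mem_cocycles₁_iff (A := Rep.of σ) f

/-! ### Contraction of a tensor factor -/

/-- Contraction of the second factor of `W ≃ W₁ ⊗ W₂` with a functional `φ` on `W₂`. -/
noncomputable def slice (e : W₁ ⊗[k] W₂ ≃ₗ[k] W) (φ : Module.Dual k W₂) : W →ₗ[k] W₁ :=
  (TensorProduct.rid k W₁).toLinearMap ∘ₗ φ.lTensor W₁ ∘ₗ e.symm.toLinearMap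

@[simp]
lemma slice_tmul (e : W₁ ⊗[k] W₂ ≃ₗ[k] W) (φ : Module.Dual k W₂) (a : W₁) (b : W₂) :
    slice e φ (e (a ⊗ₜ b)) = φ b • a := by
  simp [slice]

lemma slice_add (e : W₁ ⊗[k] W₂ ≃ₗ[k] W) (φ ψ : Module.Dual k W₂) (x : W) :
    slice e (φ + ψ) x = slice e φ x + slice e ψ x := by
  simp [slice, LinearMap.lTensor_add]

lemma slice_smul (e : W₁ ⊗[k] W₂ ≃ₗ[k] W) (c : k) (φ : Module.Dual k W₂) (x : W) :
    slice e (c • φ) x = c • slice e φ x := by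
  simp [slice, LinearMap.lTensor_smul]

lemma slice_sub (e : W₁ ⊗[k] W₂ ≃ₗ[k] W) (φ ψ : Module.Dual k W₂) (x : W) :
    slice e (φ - ψ) x = slice e φ x - slice e ψ x := by
  simp [slice, LinearMap.lTensor_sub]

/-- Two linear maps out of `W ≃ W₁ ⊗ W₂` agree if they agree on pure tensors. -/
lemma ext_tmul {U : Type} [AddCommGroup U] [Module k U] (e : W₁ ⊗[k] W₂ ≃ₗ[k] W)
    {F F' : W →ₗ[k] U} (h : ∀ a b, F (e (a ⊗ₜ b)) = F' (e (a ⊗ₜ b))) (x : W) : F x = F' x := by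
  have : F ∘ₗ e.toLinearMap = F' ∘ₗ e.toLinearMap := TensorProduct.ext' h
  simpa using LinearMap.congr_fun this (e.symm x)

lemma slice_equivariant_left (e : W₁ ⊗[k] W₂ ≃ₗ[k] W) {A : W →ₗ[k] W} {S : W₁ →ₗ[k] W₁}
    (h : ∀ a b, A (e (a ⊗ₜ b)) = e (S a ⊗ₜ b)) (φ : Module.Dual k W₂) (x : W) :
    slice e φ (A x) = S (slice e φ x) :=
  ext_tmul e (F := slice e φ ∘ₗ A) (F' := S ∘ₗ slice e φ) (fun a b => by simp [h]) x

lemma slice_equivariant_right (e : W₁ ⊗[k] W₂ ≃ₗ[k] W) {A : W →ₗ[k] W} {S : W₂ →ₗ[k] W₂}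
    (h : ∀ a b, A (e (a ⊗ₜ b)) = e (a ⊗ₜ S b)) (φ : Module.Dual k W₂) (x : W) :
    slice e φ (A x) = slice e (φ ∘ₗ S) x :=
  ext_tmul e (F := slice e φ ∘ₗ A) (F' := slice e (φ ∘ₗ S)) (fun a b => by simp [h]) x

lemma eq_sum_slice {ι : Type} [Fintype ι] (e : W₁ ⊗[k] W₂ ≃ₗ[k] W) (b : Module.Basis ι k W₂)
    (x : W) : x = ∑ j, e (slice e (b.coord j) x ⊗ₜ b j) := by
  have := ext_tmul e (F := LinearMap.id)
    (F' := ∑ j, e.toLinearMap ∘ₗ (TensorProduct.mk k W₁ W₂).flip (b j) ∘ₗ slice e (b.coord j))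
    (fun a c => ?_) x
  · simpa using this
  · simp only [LinearMap.id_apply, LinearMap.sum_apply, LinearMap.comp_apply, slice_tmul,
      LinearMap.flip_apply, TensorProduct.mk_apply, LinearEquiv.coe_coe, TensorProduct.smul_tmul,
      ← map_sum, ← TensorProduct.tmul_sum, Module.Basis.coord_apply, b.sum_repr]

/-- If the invariants of `W₁` lie in `k w₁`, then the `G₁`-invariants of `W₁ ⊗ W₂` lie in
`w₁ ⊗ W₂`. -/
lemma eq_tmul_of_invariant [FiniteDimensional k W₂] (e : W₁ ⊗[k] W₂ ≃ₗ[k] W)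
    (σ₁ : Representation k G₁ W₁) {w₁ : W₁}
    (hw₁ : ∀ a, (∀ g, σ₁ g a = a) → ∃ c : k, a = c • w₁) (A : G₁ → W →ₗ[k] W)
    (hA : ∀ g a b, A g (e (a ⊗ₜ b)) = e (σ₁ g a ⊗ₜ b)) (x : W) (hx : ∀ g, A g x = x) :
    ∃ y, x = e (w₁ ⊗ₜ y) := by
  let b := Module.finBasis k W₂
  have h : ∀ j, ∃ c : k, slice e (b.coord j) x = c • w₁ := fun j => hw₁ _ fun g => by
    rw [← slice_equivariant_left e (hA g), hx]
  choose c hc using h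
  refine ⟨∑ j, c j • b j, ?_⟩
  conv_lhs => rw [eq_sum_slice e b x]
  simp [hc, TensorProduct.smul_tmul, TensorProduct.tmul_sum]

/-! ### Contractions of `G₂`-invariant classes -/

/-- If `f : G₁ → W₁ ⊗ W₂` is fixed by `G₂` modulo coboundaries of `G₁`, then contracting `f` with
a functional that vanishes on the invariants of `W₂` gives a coboundary. -/
lemma slice_coboundary [FiniteDimensional k W₂] (e : W₁ ⊗[k] W₂ ≃ₗ[k] W)
    (σ₁ : Representation k G₁ W₁) (σ₂ : Representation k G₂ W₂) {w₂ : W₂}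
    (hw₂ : ∀ a, (∀ g, σ₂ g a = a) → ∃ c : k, a = c • w₂)
    (A : G₁ → W →ₗ[k] W) (B : G₂ → W →ₗ[k] W)
    (hA : ∀ g a b, A g (e (a ⊗ₜ b)) = e (σ₁ g a ⊗ₜ b))
    (hB : ∀ g a b, B g (e (a ⊗ₜ b)) = e (a ⊗ₜ σ₂ g b))
    (f : G₁ → W) (u : G₂ → W) (hf : ∀ g₁ g₂, B g₂ (f g₁) - f g₁ = A g₁ (u g₂) - u g₂)
    (φ : Module.Dual k W₂) (hφ : φ w₂ = 0) :
    ∃ x : W₁, ∀ g, slice e φ (f g) = σ₁ g x - x := by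
  let K : Submodule k (Module.Dual k W₂) :=
    { carrier := {φ | ∃ x : W₁, ∀ g, slice e φ (f g) = σ₁ g x - x}
      zero_mem' := ⟨0, fun g => by simp [slice]⟩
      add_mem' := by
        rintro φ ψ ⟨x, hx⟩ ⟨y, hy⟩
        exact ⟨x + y, fun g => by rw [slice_add, hx, hy, map_add]; abel⟩
      smul_mem' := by
        rintro c φ ⟨x, hx⟩
        exact ⟨c • x, fun g => by rw [slice_smul, hx, map_smul, smul_sub]⟩ }
  have hK : ∀ ψ : Module.Dual k W₂, ∀ g, ψ ∘ₗ σ₂ g - ψ ∈ K := fun ψ g => by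
    refine ⟨slice e ψ (u g), fun g₁ => ?_⟩
    rw [slice_sub, ← slice_equivariant_right e (hB g), ← map_sub, hf, map_sub,
      slice_equivariant_left e (hA g₁)]
  -- By double annihilators it suffices that `φ` vanishes on the common kernel of `K`, and this
  -- common kernel consists of invariant vectors.
  change φ ∈ K
  rw [← Subspace.dualCoannihilator_dualAnnihilator_eq (W := K), Submodule.mem_dualAnnihilator]
  intro w hw
  rw [Submodule.mem_dualCoannihilator] at hw
  obtain ⟨c, rfl⟩ := hw₂ w fun g => by
    rw [← sub_eq_zero, ← Module.forall_dual_apply_eq_zero_iff k]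
    intro ψ
    simpa using hw _ (hK ψ g)
  simp [hφ]

/-- If the contractions of `f` with functionals vanishing at `w₂` are coboundaries, then `f` is
cohomologous to `c₁ ⊗ w₂`, where `c₁` is the contraction of `f` with any `φ₀` with `φ₀ w₂ = 1`. -/
lemma exists_sub_coboundary [FiniteDimensional k W₂] (e : W₁ ⊗[k] W₂ ≃ₗ[k] W)
    (σ₁ : Representation k G₁ W₁) {w₂ : W₂} (A : G₁ → W →ₗ[k] W)
    (hA : ∀ g a b, A g (e (a ⊗ₜ b)) = e (σ₁ g a ⊗ₜ b)) (f : G₁ → W)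
    (hf : ∀ φ : Module.Dual k W₂, φ w₂ = 0 → ∃ x : W₁, ∀ g, slice e φ (f g) = σ₁ g x - x)
    (φ₀ : Module.Dual k W₂) (hφ₀ : φ₀ w₂ = 1) :
    ∃ X : W, ∀ g, f g = e (slice e φ₀ (f g) ⊗ₜ w₂) + (A g X - X) := by
  let b := Module.finBasis k W₂
  have h : ∀ j, ∃ x : W₁, ∀ g,
      slice e (b.coord j - b.coord j w₂ • φ₀) (f g) = σ₁ g x - x := fun j =>
    hf _ (by simp [hφ₀])
  choose x hx using h
  refine ⟨∑ j, e (x j ⊗ₜ b j), fun g => ?_⟩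
  have hx' : ∀ j, slice e (b.coord j) (f g) =
      b.coord j w₂ • slice e φ₀ (f g) + (σ₁ g (x j) - x j) := fun j => by
    rw [← hx j g, slice_sub, slice_smul]; abel
  have hw : e (slice e φ₀ (f g) ⊗ₜ w₂) = ∑ j, e ((b.coord j w₂ • slice e φ₀ (f g)) ⊗ₜ b j) := by
    simp only [TensorProduct.smul_tmul, ← map_sum, ← TensorProduct.tmul_sum,
      Module.Basis.coord_apply, b.sum_repr]
  conv_lhs => rw [eq_sum_slice e b (f g)]
  simp only [hx', hw, map_sum, hA, TensorProduct.add_tmul, TensorProduct.sub_tmul, map_add,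
    map_sub, Finset.sum_add_distrib, Finset.sum_sub_distrib]

/-! ### `H¹` of a product of groups -/

section Product

variable (e : W₁ ⊗[k] W₂ ≃ₗ[k] W)
  (σ₁ : Representation k G₁ W₁) (σ₂ : Representation k G₂ W₂) (T : Representation k (G₁ × G₂) W)
  (hT : ∀ g a b, T g (e (a ⊗ₜ b)) = e (σ₁ g.1 a ⊗ₜ σ₂ g.2 b))
  {w₁ : W₁} {w₂ : W₂}

include hT

lemma kunneth_mem_cocycles (hi₁ : ∀ g, σ₁ g w₁ = w₁) (hi₂ : ∀ g, σ₂ g w₂ = w₂)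
    {c₁ : G₁ → W₁} {c₂ : G₂ → W₂} (h₁ : ∀ g h, c₁ (g * h) = σ₁ g (c₁ h) + c₁ g)
    (h₂ : ∀ g h, c₂ (g * h) = σ₂ g (c₂ h) + c₂ g) (g h : G₁ × G₂) :
    e (c₁ (g * h).1 ⊗ₜ w₂) + e (w₁ ⊗ₜ c₂ (g * h).2) =
      T g (e (c₁ h.1 ⊗ₜ w₂) + e (w₁ ⊗ₜ c₂ h.2)) + (e (c₁ g.1 ⊗ₜ w₂) + e (w₁ ⊗ₜ c₂ g.2)) := by
  simp only [Prod.fst_mul, Prod.snd_mul, h₁, h₂, map_add, hT, hi₁, hi₂, TensorProduct.add_tmul,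
    TensorProduct.tmul_add]
  abel

/-- One half of the injectivity statement: `c₁ ⊗ w₂` is a coboundary on `G₁` only if `c₁` is. -/
lemma coboundary_left (hw₂ : w₂ ≠ 0) {c₁ : G₁ → W₁} {x : W}
    (h : ∀ g, e (c₁ g ⊗ₜ w₂) = T (g, 1) x - x) : ∃ y, ∀ g, c₁ g = σ₁ g y - y := by
  obtain ⟨φ, hφ⟩ := Module.Projective.exists_dual_ne_zero k hw₂
  refine ⟨(φ w₂)⁻¹ • slice e φ x, fun g => ?_⟩
  have := congrArg (slice e φ) (h g)
  rw [slice_tmul, map_sub,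
    slice_equivariant_left e (A := T (g, 1)) (S := σ₁ g) (fun a b => by simp [hT])] at this
  rw [map_smul, ← smul_sub, ← this, smul_smul, inv_mul_cancel₀ hφ, one_smul]

lemma hT_comm (g : G₂ × G₁) (b : W₂) (a : W₁) :
    T g.swap ((TensorProduct.comm k W₂ W₁ ≪≫ₗ e) (b ⊗ₜ a)) =
      (TensorProduct.comm k W₂ W₁ ≪≫ₗ e) (σ₂ g.1 b ⊗ₜ σ₁ g.2 a) := by
  simp [hT]

/-- `c₁ ⊗ w₂ + w₁ ⊗ c₂` is a coboundary of `G₁ × G₂` exactly when `c₁` and `c₂` are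
coboundaries. -/
lemma kunneth_coboundary_iff (hw₁ : w₁ ≠ 0) (hw₂ : w₂ ≠ 0)
    (hi₁ : ∀ g, σ₁ g w₁ = w₁) (hi₂ : ∀ g, σ₂ g w₂ = w₂)
    {c₁ : G₁ → W₁} {c₂ : G₂ → W₂} (h₁ : c₁ 1 = 0) (h₂ : c₂ 1 = 0) :
    (∃ x, ∀ g : G₁ × G₂, e (c₁ g.1 ⊗ₜ w₂) + e (w₁ ⊗ₜ c₂ g.2) = T g x - x) ↔
      (∃ y, ∀ g, c₁ g = σ₁ g y - y) ∧ ∃ z, ∀ g, c₂ g = σ₂ g z - z := by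
  constructor
  · rintro ⟨x, hx⟩
    refine ⟨coboundary_left e σ₁ σ₂ T hT hw₂ (x := x) fun g => by simpa [h₂] using hx (g, 1), ?_⟩
    -- The second half is the first one with the two factors exchanged.
    refine coboundary_left (TensorProduct.comm k W₂ W₁ ≪≫ₗ e) σ₂ σ₁
      (T.comp (MulEquiv.prodComm (M := G₂) (N := G₁)).toMonoidHom)
      (fun g b a => hT_comm e σ₁ σ₂ T hT g b a) hw₁ (x := x) fun g => ?_
    simpa [h₁] using hx (1, g)
  · rintro ⟨⟨y, hy⟩, z, hz⟩
    refine ⟨e (y ⊗ₜ w₂) + e (w₁ ⊗ₜ z), fun g => ?_⟩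
    simp only [hy, hz, map_add, hT, hi₁, hi₂, TensorProduct.sub_tmul, TensorProduct.tmul_sub,
      map_sub]
    abel

/-- Every cocycle of `G₁ × G₂` in `W₁ ⊗ W₂` is cohomologous to `c₁ ⊗ w₂ + w₁ ⊗ c₂` for some
cocycles `c₁` and `c₂`. -/
lemma exists_kunneth_decomposition [FiniteDimensional k W₂] (hw₁ : w₁ ≠ 0) (hw₂ : w₂ ≠ 0)
    (hi₁ : ∀ g, σ₁ g w₁ = w₁) (hi₂ : ∀ g, σ₂ g w₂ = w₂)
    (hs₁ : ∀ a, (∀ g, σ₁ g a = a) → ∃ c : k, a = c • w₁)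
    (hs₂ : ∀ a, (∀ g, σ₂ g a = a) → ∃ c : k, a = c • w₂)
    (f : G₁ × G₂ → W) (hf : ∀ g h, f (g * h) = T g (f h) + f g) :
    ∃ (c₁ : G₁ → W₁) (c₂ : G₂ → W₂) (X : W),
      (∀ g h, c₁ (g * h) = σ₁ g (c₁ h) + c₁ g) ∧ (∀ g h, c₂ (g * h) = σ₂ g (c₂ h) + c₂ g) ∧
      ∀ g, f g = e (c₁ g.1 ⊗ₜ w₂) + e (w₁ ⊗ₜ c₂ g.2) + (T g X - X) := by
  have hA : ∀ (g : G₁) a b, T (g, 1) (e (a ⊗ₜ b)) = e (σ₁ g a ⊗ₜ b) := fun g a b => by simp [hT]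
  have hB : ∀ (g : G₂) a b, T (1, g) (e (a ⊗ₜ b)) = e (a ⊗ₜ σ₂ g b) := fun g a b => by simp [hT]
  obtain ⟨φ₁, hφ₁⟩ := Module.Projective.exists_dual_ne_zero k hw₂
  obtain ⟨φ₀, hφ₀⟩ : ∃ φ₀ : Module.Dual k W₂, φ₀ w₂ = 1 :=
    ⟨(φ₁ w₂)⁻¹ • φ₁, by simp [hφ₁]⟩
  have hsplit : ∀ g₁ g₂, f (g₁, g₂) = T (g₁, 1) (f (1, g₂)) + f (g₁, 1) := fun g₁ g₂ => by
    simpa using hf (g₁, 1) (1, g₂)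
  have hcomm : ∀ g₁ g₂, T (1, g₂) (f (g₁, 1)) - f (g₁, 1) =
      T (g₁, 1) (f (1, g₂)) - f (1, g₂) := fun g₁ g₂ => by
    have h := hf (1, g₂) (g₁, 1)
    simp only [Prod.mk_mul_mk, one_mul, mul_one] at h
    rw [sub_eq_sub_iff_add_eq_add, ← h, hsplit]
  obtain ⟨X, hX⟩ := exists_sub_coboundary e σ₁ (fun g => T (g, 1)) hA (fun g => f (g, 1))
    (slice_coboundary e σ₁ σ₂ hs₂ (fun g => T (g, 1)) (fun g => T (1, g)) hA hB
      (fun g => f (g, 1)) (fun g => f (1, g)) hcomm) φ₀ hφ₀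
  set c₁ : G₁ → W₁ := fun g => slice e φ₀ (f (g, 1)) with hc₁
  have hTT : ∀ (g₁ : G₁) (g₂ : G₂) x, T (g₁, 1) (T (1, g₂) x) = T (1, g₂) (T (g₁, 1) x) :=
    fun g₁ g₂ x => by
      rw [← Module.End.mul_apply, ← Module.End.mul_apply, ← map_mul, ← map_mul]; simp
  -- As `c₁ ⊗ w₂` is fixed by `G₂`, the commutation relation makes `f(1, ·) - ∂X` fixed by `G₁`.
  have hinv : ∀ g₂ g₁, T (g₁, 1) (f (1, g₂) - (T (1, g₂) X - X)) =
      f (1, g₂) - (T (1, g₂) X - X) := fun g₂ g₁ => by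
    have h := hcomm g₁ g₂
    rw [hX g₁, map_add, hB, hi₂, map_sub, ← hTT] at h
    rw [map_sub, map_sub, ← sub_eq_zero]
    rw [← sub_eq_zero] at h
    rw [← neg_eq_zero, ← h]
    abel
  choose c₂ hc₂ using fun g₂ =>
    eq_tmul_of_invariant e σ₁ hs₁ (fun g => T (g, 1)) hA _ (hinv g₂)
  have hc₂' : ∀ g, f (1, g) = e (w₁ ⊗ₜ c₂ g) + (T (1, g) X - X) := fun g => by
    rw [← hc₂ g]; abel
  refine ⟨c₁, c₂, X, fun g h => ?_, fun g h => ?_, fun g => ?_⟩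
  · have := hf (g, 1) (h, 1)
    simp only [Prod.mk_mul_mk, mul_one] at this
    simp only [hc₁, this, map_add, slice_equivariant_left e (hA g)]
  · -- The map `w₁ ⊗ ·` is injective, so the cocycle identity descends to `c₂`.
    have h0 := hf (1, g) (1, h)
    simp only [Prod.mk_mul_mk, mul_one] at h0
    have hm : T (1, g * h) X = T (1, g) (T (1, h) X) := by
      rw [← Module.End.mul_apply, ← map_mul]; simp
    rw [hc₂', hc₂', hc₂', hm, map_add, map_sub, hB] at h0
    have h1 : e (w₁ ⊗ₜ (c₂ (g * h))) = e (w₁ ⊗ₜ (σ₂ g (c₂ h) + c₂ g)) := by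
      rw [TensorProduct.tmul_add, map_add, ← sub_eq_zero]
      rw [← sub_eq_zero] at h0
      rw [← h0]
      abel
    obtain ⟨ψ, hψ⟩ := Module.Projective.exists_dual_ne_zero k hw₁
    have h2 := congrArg (fun t => TensorProduct.lid k W₂ (ψ.rTensor W₂ t)) (e.injective h1)
    simp only [LinearMap.rTensor_tmul, TensorProduct.lid_tmul] at h2
    exact smul_right_injective _ hψ h2
  · obtain ⟨g₁, g₂⟩ := g
    have hm : T (g₁, g₂) X = T (g₁, 1) (T (1, g₂) X) := by
      rw [← Module.End.mul_apply, ← map_mul]; simp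
    rw [hsplit, hX g₁, hc₂', map_add, map_sub, hA, hi₁, hm]
    abel

/-- The Künneth-type isomorphism for `H¹` of a tensor product of two representations whose
invariants are lines. -/
theorem nonempty_H1_equiv [FiniteDimensional k W₂] (hw₁ : w₁ ≠ 0) (hw₂ : w₂ ≠ 0)
    (hi₁ : ∀ g, σ₁ g w₁ = w₁) (hi₂ : ∀ g, σ₂ g w₂ = w₂)
    (hs₁ : ∀ a, (∀ g, σ₁ g a = a) → ∃ c : k, a = c • w₁)
    (hs₂ : ∀ a, (∀ g, σ₂ g a = a) → ∃ c : k, a = c • w₂) :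
    Nonempty (H1 (Rep.of T) ≃ₗ[k] H1 (Rep.of σ₁) × H1 (Rep.of σ₂)) := by
  let Z₁ := cocycles₁ (Rep.of σ₁)
  let Z₂ := cocycles₁ (Rep.of σ₂)
  let Φ₀ : Z₁ × Z₂ →ₗ[k] cocycles₁ (Rep.of T) :=
    { toFun := fun c => ⟨fun g => e (c.1.1 g.1 ⊗ₜ w₂) + e (w₁ ⊗ₜ c.2.1 g.2),
        (mem_cocycles₁_of_iff T _).2 (kunneth_mem_cocycles e σ₁ σ₂ T hT hi₁ hi₂
          ((mem_cocycles₁_of_iff σ₁ _).1 c.1.2) ((mem_cocycles₁_of_iff σ₂ _).1 c.2.2))⟩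
      map_add' := fun c d => Subtype.ext <| funext fun g => by
        change e ((c.1.1 g.1 + d.1.1 g.1) ⊗ₜ w₂) + e (w₁ ⊗ₜ (c.2.1 g.2 + d.2.1 g.2)) =
          (e (c.1.1 g.1 ⊗ₜ w₂) + e (w₁ ⊗ₜ c.2.1 g.2)) +
          (e (d.1.1 g.1 ⊗ₜ w₂) + e (w₁ ⊗ₜ d.2.1 g.2))
        rw [TensorProduct.add_tmul, TensorProduct.tmul_add, map_add, map_add]
        abel
      map_smul' := fun r c => Subtype.ext <| funext fun g => by
        change e ((r • c.1.1 g.1) ⊗ₜ w₂) + e (w₁ ⊗ₜ (r • c.2.1 g.2)) =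
          r • (e (c.1.1 g.1 ⊗ₜ w₂) + e (w₁ ⊗ₜ c.2.1 g.2))
        rw [← TensorProduct.smul_tmul', TensorProduct.tmul_smul, map_smul, map_smul, smul_add] }
  let Φ : Z₁ × Z₂ →ₗ[k] H1 (Rep.of T) := (H1π (Rep.of T)).hom ∘ₗ Φ₀
  let Ψ : Z₁ × Z₂ →ₗ[k] H1 (Rep.of σ₁) × H1 (Rep.of σ₂) :=
    (H1π (Rep.of σ₁)).hom.prodMap (H1π (Rep.of σ₂)).hom
  have hΦ : Function.Surjective Φ := fun y => by
    induction y using H1_induction_on with | h f => ?_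
    obtain ⟨c₁, c₂, X, h₁, h₂, h⟩ := exists_kunneth_decomposition e σ₁ σ₂ T hT hw₁ hw₂ hi₁ hi₂
      hs₁ hs₂ f.1 ((mem_cocycles₁_of_iff T _).1 f.2)
    refine ⟨(⟨c₁, (mem_cocycles₁_of_iff σ₁ _).2 h₁⟩, ⟨c₂, (mem_cocycles₁_of_iff σ₂ _).2 h₂⟩),
      Eq.symm ((H1π_eq_iff _ _).2 ((mem_coboundaries₁_of_iff T _).2 ⟨X, fun g => ?_⟩))⟩
    exact sub_eq_of_eq_add' (h g)
  have hΨ : Function.Surjective Ψ :=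
    Function.Surjective.prodMap
      ((ModuleCat.epi_iff_surjective (H1π (Rep.of σ₁))).1 inferInstance)
      ((ModuleCat.epi_iff_surjective (H1π (Rep.of σ₂))).1 inferInstance)
  have hker : LinearMap.ker Φ = LinearMap.ker Ψ := by
    ext c
    have h₁ : Φ c = 0 ↔ _ := (H1π_eq_zero_iff (Φ₀ c)).trans (mem_coboundaries₁_of_iff T _)
    have h₂ : Ψ c = 0 ↔ _ := Prod.ext_iff.trans (and_congr
      ((H1π_eq_zero_iff c.1).trans (mem_coboundaries₁_of_iff σ₁ _))
      ((H1π_eq_zero_iff c.2).trans (mem_coboundaries₁_of_iff σ₂ _)))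
    rw [LinearMap.mem_ker, LinearMap.mem_ker, h₁, h₂]
    exact kunneth_coboundary_iff e σ₁ σ₂ T hT hw₁ hw₂ hi₁ hi₂
      (cocycles₁_map_one c.1) (cocycles₁_map_one c.2)
  exact ⟨(Φ.quotKerEquivOfSurjective hΦ).symm ≪≫ₗ Submodule.quotEquivOfEq _ _ hker ≪≫ₗ
    Ψ.quotKerEquivOfSurjective hΨ⟩

end Product

/-! ### Invariants of the adjoint representation -/

section Schur

variable {V : Type} [AddCommGroup V] [Module k V]

/-- **Schur's lemma**: over an algebraically closed field, the invariants of `ad ρ` are the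
scalars. -/
lemma schur [IsAlgClosed k] [FiniteDimensional k V] [Nontrivial V] (ρ : Representation k G V)
    (hirr : ∀ p : Submodule k V, (∀ (g : G) (x : V), x ∈ p → ρ g x ∈ p) → p = ⊥ ∨ p = ⊤)
    (m : Module.End k V) (hm : ∀ g, ρ g ∘ₗ m ∘ₗ ρ g⁻¹ = m) : ∃ c : k, m = c • 1 := by
  obtain ⟨c, hc⟩ := Module.End.exists_eigenvalue m
  refine ⟨c, ?_⟩
  have hcomm : ∀ g x, m (ρ g x) = ρ g (m x) := fun g x => by
    conv_lhs => rw [← hm g]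
    simp
  rcases hirr (m.eigenspace c) (fun g x hx => by
    rw [Module.End.mem_eigenspace_iff] at hx ⊢
    rw [hcomm, hx, map_smul]) with h | h
  · exact absurd h hc
  · ext x
    exact Module.End.mem_eigenspace_iff.1 (h ▸ Submodule.mem_top : x ∈ m.eigenspace c)

lemma ad_one (ρ : Representation k G V) (g : G) :
    ρ g ∘ₗ (1 : Module.End k V) ∘ₗ ρ g⁻¹ = 1 := by
  ext x
  simp

end Schur

end KunnethAd

/-- for irreducible finite-dimensional complex representations `ρᵢ` of
groups `Gᵢ` (`i = 1, 2`), with `ad ρ` the conjugation representation on `End(V)`: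
`H¹(G₁ × G₂, ad (ρ₁ ⊗ ρ₂)) ≅ H¹(G₁, ad ρ₁) ⊕ H¹(G₂, ad ρ₂)`. -/
theorem H1_ad_tensor_of_irreducible {G₁ G₂ : Type} [Group G₁] [Group G₂]
    {V₁ V₂ : Type} [AddCommGroup V₁] [Module ℂ V₁] [AddCommGroup V₂] [Module ℂ V₂]
    [FiniteDimensional ℂ V₁] [FiniteDimensional ℂ V₂] [Nontrivial V₁] [Nontrivial V₂]
    (ρ₁ : Representation ℂ G₁ V₁) (ρ₂ : Representation ℂ G₂ V₂)
    -- irreducibility of `ρ₁` and `ρ₂`: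
    (hirr₁ : ∀ p : Submodule ℂ V₁, (∀ (g : G₁) (x : V₁), x ∈ p → ρ₁ g x ∈ p) → p = ⊥ ∨ p = ⊤)
    (hirr₂ : ∀ p : Submodule ℂ V₂, (∀ (g : G₂) (x : V₂), x ∈ p → ρ₂ g x ∈ p) → p = ⊥ ∨ p = ⊤)
    -- the adjoint representations `ad ρ₁`, `ad ρ₂`, acting by conjugation:
    (ad₁ : Representation ℂ G₁ (Module.End ℂ V₁))
    (had₁ : ∀ (g : G₁) (m : Module.End ℂ V₁), ad₁ g m = ρ₁ g ∘ₗ m ∘ₗ ρ₁ g⁻¹)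
    (ad₂ : Representation ℂ G₂ (Module.End ℂ V₂))
    (had₂ : ∀ (g : G₂) (m : Module.End ℂ V₂), ad₂ g m = ρ₂ g ∘ₗ m ∘ₗ ρ₂ g⁻¹)
    -- the adjoint representation `ad (ρ₁ ⊗ ρ₂)` of `G₁ × G₂` on `End(V₁ ⊗ V₂)`:
    (adT : Representation ℂ (G₁ × G₂) (Module.End ℂ (V₁ ⊗[ℂ] V₂)))
    (hadT : ∀ (g : G₁ × G₂) (m : Module.End ℂ (V₁ ⊗[ℂ] V₂)),
      adT g m = (TensorProduct.map (ρ₁ g.1) (ρ₂ g.2)) ∘ₗ m ∘ₗ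
        (TensorProduct.map (ρ₁ g.1⁻¹) (ρ₂ g.2⁻¹))) :
    Nonempty (groupCohomology.H1 (Rep.of adT) ≃ₗ[ℂ]
      groupCohomology.H1 (Rep.of ad₁) × groupCohomology.H1 (Rep.of ad₂)) := by
  refine KunnethAd.nonempty_H1_equiv (homTensorHomEquiv ℂ V₁ V₂ V₁ V₂) ad₁ ad₂ adT
    (fun g a b => ?_) (w₁ := 1) (w₂ := 1) one_ne_zero one_ne_zero
    (fun g => by rw [had₁, KunnethAd.ad_one]) (fun g => by rw [had₂, KunnethAd.ad_one])
    (fun m hm => KunnethAd.schur ρ₁ hirr₁ m fun g => by rw [← had₁, hm])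
    (fun m hm => KunnethAd.schur ρ₂ hirr₂ m fun g => by rw [← had₂, hm])
  rw [hadT, had₁, had₂]
  ext x y
  simp [homTensorHomEquiv_apply]
end

section
/- Let $G$ be a group, $V$ a complex vector space, and $\rho : G \to \mathrm{GL}(V)$ a representation. Equip $M = \mathrm{End}(V)$ with the conjugation action $g \cdot m = \rho(g)\, m\, \rho(g)^{-1}$. Let $\psi : G \to M$ be a $1$-cocycle, i.e. $\psi(gh) = \psi(g) + g \cdot \psi(h)$ for all $g,h \in G$. Let $g_1, g_2 \in G$ be elements such that $\rho(g_1)$ and $\rho(g_2)$ commute, and let $m \in M$ be such that $\psi(g_1) = \rho(g_1)\, m\, \rho(g_1)^{-1} - m$ and $\psi(g_2) = 0$. Then $\psi(g_1 g_2 g_1^{-1} g_2^{-1}) = -\,[\rho(g_1), [\rho(g_2), m]]\; \rho(g_1)^{-1} \rho(g_2)^{-1}$, where $[u,v] = u \circ v - v \circ u$. -/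
/-!
Let `c = g₁ g₂ g₁⁻¹ g₂⁻¹`. Since `ρ g₁` and `ρ g₂` commute, `ρ c = 1`, so `c` acts trivially
on `End(V)`, and the cocycle identity applied to `c * (g₂ g₁) = g₁ g₂` gives
`ψ c = ψ (g₁ g₂) - ψ (g₂ g₁)`. As `ψ g₂ = 0`, this is `ψ g₁ - g₂ · ψ g₁`. Substituting the
formula for `ψ g₁` leaves four terms, which are those of the expanded double bracket multiplied
by `(ρ g₂ ρ g₁)⁻¹`, up to sign.
-/

/-- the cocycle computation at the heart of the main lemma.
`M = End(V)` carries the conjugation action `g · m = ρ(g) m ρ(g)⁻¹`; `ψ` is a 1-cocycle;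
if `ρ(g₁)` and `ρ(g₂)` commute, `ψ(g₁) = ρ(g₁) m ρ(g₁)⁻¹ - m` and `ψ(g₂) = 0`, then
`ψ(g₁g₂g₁⁻¹g₂⁻¹) = -[ρ(g₁), [ρ(g₂), m]] ρ(g₁)⁻¹ ρ(g₂)⁻¹`. -/
theorem cocycle_on_commutator {G V : Type*} [Group G] [AddCommGroup V] [Module ℂ V]
    (ρ : Representation ℂ G V) (ψ : G → Module.End ℂ V)
    (hψ : ∀ g h : G, ψ (g * h) = ψ g + ρ g * ψ h * ρ g⁻¹)
    (g₁ g₂ : G) (hcomm : Commute (ρ g₁) (ρ g₂)) (m : Module.End ℂ V)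
    (hm₁ : ψ g₁ = ρ g₁ * m * ρ g₁⁻¹ - m) (hm₂ : ψ g₂ = 0) :
    ψ (g₁ * g₂ * g₁⁻¹ * g₂⁻¹) = -(⁅ρ g₁, ⁅ρ g₂, m⁆⁆) * (ρ g₁⁻¹ * ρ g₂⁻¹) := by
  have inv_right : ∀ g : G, ρ g * ρ g⁻¹ = 1 := fun g => by
    rw [← map_mul, mul_inv_cancel, map_one]
  have hba : ρ g₂ * ρ g₁ * (ρ g₁⁻¹ * ρ g₂⁻¹) = 1 := by
    rw [mul_assoc, ← mul_assoc (ρ g₁), inv_right, one_mul, inv_right]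
  have hb : ρ g₂ * (ρ g₁⁻¹ * ρ g₂⁻¹) = ρ g₁⁻¹ := by
    have hbA : ρ g₂ * ρ g₁⁻¹ = ρ g₁⁻¹ * ρ g₂ := by
      have inv_left : ρ g₁⁻¹ * ρ g₁ = 1 := by rw [← map_mul, inv_mul_cancel, map_one]
      calc ρ g₂ * ρ g₁⁻¹ = ρ g₁⁻¹ * (ρ g₁ * ρ g₂) * ρ g₁⁻¹ := by
            rw [← mul_assoc, inv_left, one_mul]
        _ = ρ g₁⁻¹ * ρ g₂ := by
            rw [hcomm.eq, mul_assoc, mul_assoc, inv_right, mul_one]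
    rw [← mul_assoc, hbA, mul_assoc, inv_right, mul_one]
  have ha : ρ g₁ * (ρ g₁⁻¹ * ρ g₂⁻¹) = ρ g₂⁻¹ := by
    rw [← mul_assoc, inv_right, one_mul]
  have hρc : ρ (g₁ * g₂ * g₁⁻¹ * g₂⁻¹) = 1 := by
    simp only [map_mul]
    rw [hcomm.eq, mul_assoc, hba]
  have hρc_inv : ρ (g₁ * g₂ * g₁⁻¹ * g₂⁻¹)⁻¹ = 1 := by
    have h := inv_right (g₁ * g₂ * g₁⁻¹ * g₂⁻¹)
    rwa [hρc, one_mul] at h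
  have hψc : ψ (g₁ * g₂ * g₁⁻¹ * g₂⁻¹) = ψ g₁ - ρ g₂ * ψ g₁ * ρ g₂⁻¹ := by
    -- The two factorizations of `g₁ * g₂` avoid computing `ψ` on inverses.
    have h := hψ (g₁ * g₂ * g₁⁻¹ * g₂⁻¹) (g₂ * g₁)
    rw [show g₁ * g₂ * g₁⁻¹ * g₂⁻¹ * (g₂ * g₁) = g₁ * g₂ by group, hρc, hρc_inv,
      hψ g₁ g₂, hψ g₂ g₁, hm₂] at h
    simp only [mul_zero, zero_mul, add_zero, zero_add, one_mul, mul_one] at h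
    exact eq_sub_of_add_eq h.symm
  have hbracket : ⁅ρ g₁, ⁅ρ g₂, m⁆⁆ * (ρ g₁⁻¹ * ρ g₂⁻¹) =
      ρ g₂ * (ρ g₁ * m * ρ g₁⁻¹) * ρ g₂⁻¹ - ρ g₁ * m * ρ g₁⁻¹ - ρ g₂ * m * ρ g₂⁻¹ + m := by
    have e₁ : ρ g₁ * (ρ g₂ * m) * (ρ g₁⁻¹ * ρ g₂⁻¹) =
        ρ g₂ * (ρ g₁ * m * ρ g₁⁻¹) * ρ g₂⁻¹ := by
      rw [← mul_assoc (ρ g₁), hcomm.eq]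
      simp only [mul_assoc]
    have e₂ : ρ g₁ * (m * ρ g₂) * (ρ g₁⁻¹ * ρ g₂⁻¹) = ρ g₁ * m * ρ g₁⁻¹ := by
      rw [← mul_assoc (ρ g₁), mul_assoc (ρ g₁ * m), hb]
    have e₃ : ρ g₂ * m * ρ g₁ * (ρ g₁⁻¹ * ρ g₂⁻¹) = ρ g₂ * m * ρ g₂⁻¹ := by
      rw [mul_assoc (ρ g₂ * m), ha]
    have e₄ : m * ρ g₂ * ρ g₁ * (ρ g₁⁻¹ * ρ g₂⁻¹) = m := by
      rw [mul_assoc m, mul_assoc m, hba, mul_one]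
    rw [Ring.lie_def, Ring.lie_def, mul_sub, sub_mul _ _ (ρ g₁), sub_mul, sub_mul, sub_mul,
      e₁, e₂, e₃, e₄]
    abel
  rw [neg_mul, hbracket, hψc, hm₁, mul_sub, sub_mul]
  abel
end

section
/- Let $T = \begin{pmatrix} 1 & 1 \\ 0 & 1 \end{pmatrix} \in \mathrm{SL}_2(\mathbb{Z})$. Then the quotient of $\mathrm{SL}_2(\mathbb{Z})$ by the normal closure of the element $T^5$ is a finite group. -/
/-!
In the quotient, let `s`, `t` be the classes of `S = [[0, -1], [1, 0]]` and `T`. They generate, and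
`z = s * s` is a central involution, `s t s = t⁻¹ s t⁻¹` and `t ^ 5 = 1`. Modulo `z` this is a
presentation of the triangle group of type `(2, 3, 5)`, the rotation group of the icosahedron.

The cosets of the finite subgroup `⟨t, z⟩` correspond to the twelve vertices of the icosahedron. The
rotation `t` about a vertex has four orbits on them, of sizes 1, 5, 5, 1, represented by `1`, `s`,
`s t² s` and `n = s t⁻² s t² s`, the last one being the antipodal vertex, so that `t n = n t⁻¹`.
The relations imply that the set `⟨t⟩ {1, s, s t² s, n} ⟨t⟩ ⟨z⟩` is stable under left
multiplication by `s` and `t`. It contains `1`, so it is the whole group, and it is visibly finite.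
-/

/-- The relations of the binary triangle group of type `(2, 3, 5)` force finiteness. -/
theorem finite_of_binary_icosahedral_relations {G : Type*} [Group G] (s t z : G)
    (hss : s * s = z) (hzz : z * z = 1) (hzt : Commute z t)
    (hsts : s * t * s = t⁻¹ * s * t⁻¹) (ht : t ^ 5 = 1)
    (hgen : Subgroup.closure {s, t} = ⊤) : Finite G := by
  have hzs : s * z = z * s := by rw [← hss, mul_assoc]
  have zs (x : G) : s * (z * x) = z * (s * x) := by rw [← mul_assoc, hzs, mul_assoc]
  have zt (x : G) : t * (z * x) = z * (t * x) := by rw [← mul_assoc, ← hzt.eq, mul_assoc]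
  have zti (x : G) : t⁻¹ * (z * x) = z * (t⁻¹ * x) := by
    rw [← mul_assoc, ← hzt.inv_right.eq, mul_assoc]
  have zz (x : G) : z * (z * x) = x := by rw [← mul_assoc, hzz, one_mul]
  have ss (x : G) : s * (s * x) = z * x := by rw [← mul_assoc, hss]
  have t3 (x : G) : t * (t * (t * x)) = t⁻¹ * (t⁻¹ * x) := by
    have h : t * t * t = t⁻¹ * t⁻¹ := by
      rw [← mul_inv_rev, eq_inv_iff_mul_eq_one, ← ht]
      simp only [pow_succ, pow_zero, one_mul, mul_assoc]
    simpa only [mul_assoc] using congrArg (· * x) h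
  have sts (x : G) : s * (t * (s * x)) = t⁻¹ * (s * (t⁻¹ * x)) := by
    simpa only [mul_assoc] using congrArg (· * x) hsts
  have stis (x : G) : s * (t⁻¹ * (s * x)) = z * (t * (s * (t * x))) := by
    apply mul_left_cancel (a := s)
    rw [ss, zs, sts]
    simp
  have st2s (x : G) : s * (t⁻¹ * (t⁻¹ * (s * x))) = z * (t * (s * (t * (t * (s * (t * x)))))) := by
    apply mul_left_cancel (a := t⁻¹)
    have h := sts (t⁻¹ * (s * x))
    rw [stis, zt, zs] at h
    rw [← h, zti, inv_mul_cancel_left]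
  have hD (x : G) : s * (t * (t * (s * (t * (t * (s * x)))))) =
      z * (t⁻¹ * (s * (t * (t * (s * (t⁻¹ * x)))))) := by
    have h (y : G) : s * (t * (t * (s * y))) =
        z * (t⁻¹ * (s * (t⁻¹ * (t⁻¹ * (s * (t⁻¹ * y)))))) := by
      rw [st2s, mul_inv_cancel_left, zti, inv_mul_cancel_left, zz]
    rw [h, inv_mul_cancel_left, sts, ← t3 (t⁻¹ * _)]
    simp only [mul_inv_cancel_left]
  have st2s' : s * (t⁻¹ * (t⁻¹ * s)) = z * (t * (s * (t * (t * (s * t))))) := by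
    simpa using st2s 1
  -- the coset of `n` is the vertex opposite to the coset of `1`: `t` fixes it, turning backwards
  let n : G := s * (t⁻¹ * (t⁻¹ * (s * (t * (t * s)))))
  have hn : t * n * t = n := by
    have h : n = s * (t⁻¹ * (t⁻¹ * (s * (t * (t * s))))) := rfl
    conv_rhs => rw [h, st2s, t3, st2s', zt, zt, zs, zt, zz, t3]
    simp only [h, mul_assoc]
  have htn (i : ℤ) : t ^ i * n = n * t ^ (-i) := by
    have h : SemiconjBy n t⁻¹ t := by
      rw [SemiconjBy, ← eq_mul_inv_iff_mul_eq.mpr hn]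
    simpa using (h.zpow_right i).eq.symm
  have hpow (i : ℤ) : t ^ i = 1 ∨ t ^ i = t ∨ t ^ i = t * t ∨
      t ^ i = t⁻¹ ∨ t ^ i = t⁻¹ * t⁻¹ := by
    have h5 : t ^ (5 : ℤ) = 1 := by exact_mod_cast ht
    have h : t ^ i = t ^ (i % 5) := by
      conv_lhs => rw [← Int.emod_add_mul_ediv i 5, zpow_add, zpow_mul, h5, one_zpow, mul_one]
    have h3 : t ^ (3 : ℤ) = t⁻¹ * t⁻¹ := by
      rw [← mul_inv_rev, eq_inv_iff_mul_eq_one, ← h5]; group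
    have h4 : t ^ (4 : ℤ) = t⁻¹ := by
      rw [eq_inv_iff_mul_eq_one, ← h5]; group
    rw [h]
    have h0 := Int.emod_nonneg i (by norm_num : (5 : ℤ) ≠ 0)
    have h1 := Int.emod_lt_of_pos i (by norm_num : (0 : ℤ) < 5)
    interval_cases i % 5
    · simp
    · simp
    · simp [zpow_ofNat, pow_two]
    · simp [h3]
    · simp [h4]
  let R : Set G := {1, s, s * (t * (t * s)), n}
  let F : Set G := {g | ∃ i : ℤ, ∃ r ∈ R, ∃ j k : ℤ, g = t ^ i * (r * (t ^ j * z ^ k))}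
  have hFfin : F.Finite := by
    have hT : (Subgroup.zpowers t : Set G).Finite :=
      (isOfFinOrder_iff_pow_eq_one.mpr ⟨5, by norm_num, ht⟩).finite_zpowers
    have hZ : (Subgroup.zpowers z : Set G).Finite :=
      (isOfFinOrder_iff_pow_eq_one.mpr ⟨2, by norm_num, by rw [pow_two, hzz]⟩).finite_zpowers
    have hR : R.Finite := Set.toFinite _
    refine (Set.Finite.mul hT (hR.mul (hT.mul hZ))).subset ?_
    rintro _ ⟨i, r, hr, j, k, rfl⟩
    exact Set.mul_mem_mul ⟨i, rfl⟩ (Set.mul_mem_mul hr (Set.mul_mem_mul ⟨j, rfl⟩ ⟨k, rfl⟩))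
  have hFr (g : G) (hg : g ∈ F) (j k : ℤ) : g * (t ^ j * z ^ k) ∈ F := by
    obtain ⟨i, r, hr, j', k', rfl⟩ := hg
    refine ⟨i, r, hr, j' + j, k' + k, ?_⟩
    have h : z ^ k' * t ^ j = t ^ j * z ^ k' := (hzt.zpow_zpow k' j).eq
    simp only [zpow_add, mul_assoc]
    rw [← mul_assoc (z ^ k'), h, mul_assoc]
  have hFt (g : G) (hg : g ∈ F) (m : ℤ) : t ^ m * g ∈ F := by
    obtain ⟨i, r, hr, j, k, rfl⟩ := hg
    exact ⟨m + i, r, hr, j, k, by rw [zpow_add, mul_assoc]⟩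
  -- a membership criterion matching the shape of the rewritten words
  have mk (e r : G) (i j k : ℤ) (hr : r ∈ R) (h : e = z ^ k * (t ^ i * (r * t ^ j))) : e ∈ F := by
    have hc : ∀ x, Commute z x := by
      intro x
      have hx : x ∈ Subgroup.closure {s, t} := hgen ▸ Subgroup.mem_top x
      induction hx using Subgroup.closure_induction with
      | mem x hx =>
        rcases hx with rfl | rfl
        · exact hzs.symm
        · exact hzt
      | one => exact Commute.one_right z
      | mul x y _ _ hx hy => exact hx.mul_right hy
      | inv x _ hx => exact hx.inv_right
    exact ⟨i, r, hr, j, k, by rw [h, ((hc _).zpow_left k).eq]; simp only [mul_assoc]⟩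
  have R1 : (1 : G) ∈ R := by simp [R]
  have Rs : s ∈ R := by simp [R]
  have Rss : s * (t * (t * s)) ∈ R := by simp [R]
  have Rn : n ∈ R := by simp [R]
  -- `s` maps each of the twelve cosets into `F`; for the two orbits of size five, `i` matters mod 5
  have hsR (i : ℤ) (r : G) (hr : r ∈ R) : s * (t ^ i * r) ∈ F := by
    rcases hr with rfl | hr | hr | hr
    · have := hFr s (mk s s 0 0 0 Rs (by simp)) i 0
      simpa using this
    · rw [hr]
      rcases hpow i with h | h | h | h | h <;> rw [h] <;> try simp only [mul_assoc]
      · exact mk _ 1 0 0 1 R1 (by simp [hss])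
      · exact mk _ s (-1) (-1) 0 Rs (by simpa using sts 1)
      · exact mk _ _ 0 0 0 Rss (by simp)
      · exact mk _ s 1 1 1 Rs (by simpa using stis 1)
      · exact mk _ _ 1 1 1 Rss (by simp [st2s', mul_assoc])
    · rw [hr]
      rcases hpow i with h | h | h | h | h <;> rw [h] <;> try simp only [mul_assoc]
      · exact mk _ s 2 0 1 Rs (by simp [ss, zpow_ofNat, pow_two, mul_assoc])
      · exact mk _ s (-2) (-1) 0 Rs (by
          have := sts 1
          simp only [mul_one] at this
          simp [sts, this, zpow_ofNat, pow_two, mul_assoc])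
      · exact mk _ _ (-1) (-1) 1 Rss (by simpa [mul_assoc] using hD 1)
      · exact mk _ _ 2 1 0 Rss (by
          rw [stis, t3, st2s', zt, zz]
          simp [zpow_ofNat, pow_two, mul_assoc])
      · exact mk _ n 0 0 0 Rn (by simp [n])
    · rw [hr, htn, ← mul_assoc]
      have h : s * n ∈ F := mk _ _ (-2) 0 1 Rss (by
        simp [n, ss, zpow_ofNat, pow_two, mul_assoc])
      simpa using hFr _ h (-i) 0
  have hFs (g : G) (hg : g ∈ F) : s * g ∈ F := by
    obtain ⟨i, r, hr, j, k, rfl⟩ := hg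
    have := hFr _ (hsR i r hr) j k
    simpa only [mul_assoc] using this
  have hall (g : G) : g ∈ F := by
    have hg : g ∈ Subgroup.closure {s, t} := hgen ▸ Subgroup.mem_top g
    induction hg using Subgroup.closure_induction_left with
    | one => exact mk 1 1 0 0 0 R1 (by simp)
    | mul_left x hx y _ hy =>
      rcases hx with rfl | rfl
      · exact hFs y hy
      · simpa using hFt y hy 1
    | inv_mul_cancel x hx y _ hy =>
      rcases hx with rfl | rfl
      · -- `s⁻¹ = s ^ 3`
        have h : x⁻¹ * y = x * (x * (x * y)) := by
          rw [inv_mul_eq_iff_eq_mul, ss, ss, zz]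
        rw [h]
        exact hFs _ (hFs _ (hFs _ hy))
      · simpa using hFt y hy (-1)
  exact Set.finite_univ_iff.mp (hFfin.subset fun g _ => hall g)

/-- the quotient of `SL(2, ℤ)` by the normal closure of `T ^ 5`, where
`T = [[1, 1], [0, 1]]`, is a finite group. -/
theorem sl2z_quotient_T_pow_five_finite (T : Matrix.SpecialLinearGroup (Fin 2) ℤ)
    (hT : (T : Matrix (Fin 2) (Fin 2) ℤ) = !![1, 1; 0, 1]) :
    Finite (Matrix.SpecialLinearGroup (Fin 2) ℤ ⧸ Subgroup.normalClosure {T ^ 5}) := by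
  obtain rfl : T = ModularGroup.T := Subtype.ext hT
  let π := QuotientGroup.mk' (Subgroup.normalClosure {ModularGroup.T ^ 5})
  have hsq : ModularGroup.S * ModularGroup.S = -1 := by decide
  have hsts : ModularGroup.S * ModularGroup.T * ModularGroup.S =
      ModularGroup.T⁻¹ * ModularGroup.S * ModularGroup.T⁻¹ := by
    decide
  refine finite_of_binary_icosahedral_relations (π ModularGroup.S) (π ModularGroup.T) (π (-1))
    ?_ ?_ ?_ ?_ ?_ ?_
  · rw [← map_mul, hsq]
  · rw [← map_mul]; simp
  · exact Commute.map (by simp [Commute, SemiconjBy]) π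
  · simp only [← map_mul, ← map_inv, hsts]
  · rw [← map_pow]
    exact (QuotientGroup.eq_one_iff _).mpr (Subgroup.subset_normalClosure rfl)
  · rw [← Set.image_pair, ← MonoidHom.map_closure, SpecialLinearGroup.SL2Z_generators,
      ← MonoidHom.range_eq_map]
    exact MonoidHom.range_eq_top.mpr (QuotientGroup.mk'_surjective _)
end
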